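/- For all M, N ∈ C(𝒫;ℝ)⁴, ‖𝒯(M) − 𝒯(N)‖ ≤ (τ'−τ)·4cS·(‖M‖ + ‖N‖)·‖M − N‖, where ‖P‖ = max_{1≤i≤4} ‖P_i‖∞. -/

import Mathlib

/-!
Follow the `i`-th characteristic backwards from a point of `𝒫` until it reaches either the initial
time or the inflow side of the rectangle. Along this segment `𝒯ᵢ(M)` is `±∫ Q(M)` plus a datum that
does not depend on `M`, so the data cancel in `𝒯ᵢ(M) - 𝒯ᵢ(N)`. The segment lasts at most `τ' - τ`
and stays in `𝒫`, where the bilinear identity `ab - a'b' = a(b - b') + (a - a')b'`, applied to the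
two products in `Q`, bounds `|Q(M) - Q(N)|` by `4cS (‖M‖ + ‖N‖) ‖M - N‖`.
-/

open Set MeasureTheory

noncomputable section

/-- The Broadwell collision term `Q(N) = 2cS (N₂N₃ - N₁N₄)` (indexing `N₁ = M 0`, …). -/
def QQ (c S : ℝ) (M : Fin 4 → ℝ → ℝ → ℝ → ℝ) (t x y : ℝ) : ℝ :=
  2 * c * S * (M 1 t x y * M 2 t x y - M 0 t x y * M 3 t x y)

/-- Signs of `Q` in the four Broadwell equations. -/
def sgn4 : Fin 4 → ℝ := ![1, -1, -1, 1]

/-- `x`-components of the four velocities. -/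
def spX (c : ℝ) : Fin 4 → ℝ := ![c, 0, 0, -c]

/-- `y`-components of the four velocities. -/
def spY (c : ℝ) : Fin 4 → ℝ := ![0, c, -c, 0]

/-- Partial derivative in `t`. -/
def pdtF (f : ℝ → ℝ → ℝ → ℝ) (t x y : ℝ) : ℝ := deriv (fun s => f s x y) t

/-- Partial derivative in `x`. -/
def pdxF (f : ℝ → ℝ → ℝ → ℝ) (t x y : ℝ) : ℝ := deriv (fun s => f t s y) x

/-- Partial derivative in `y`. -/
def pdyF (f : ℝ → ℝ → ℝ → ℝ) (t x y : ℝ) : ℝ := deriv (fun s => f t x s) y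

/-- `f` possesses all three first-order partial derivatives at `p`. -/
def HasPartials (f : ℝ → ℝ → ℝ → ℝ) (p : ℝ × ℝ × ℝ) : Prop :=
  DifferentiableAt ℝ (fun s => f s p.2.1 p.2.2) p.1 ∧
  DifferentiableAt ℝ (fun s => f p.1 s p.2.2) p.2.1 ∧
  DifferentiableAt ℝ (fun s => f p.1 p.2.1 s) p.2.2

/-- Continuity of a curried function of three real variables on a set. -/
def Cont3 (f : ℝ → ℝ → ℝ → ℝ) (D : Set (ℝ × ℝ × ℝ)) : Prop :=
  ContinuousOn (fun p : ℝ × ℝ × ℝ => f p.1 p.2.1 p.2.2) D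

/-- Sup norm over `D` of a function of three variables. -/
def supNorm3 (D : Set (ℝ × ℝ × ℝ)) (f : ℝ → ℝ → ℝ → ℝ) : ℝ :=
  sSup ((fun p : ℝ × ℝ × ℝ => |f p.1 p.2.1 p.2.2|) '' D)

/-- `‖N‖ = max_i ‖N_i‖_∞` over `D`. -/
def norm4 (D : Set (ℝ × ℝ × ℝ)) (M : Fin 4 → ℝ → ℝ → ℝ → ℝ) : ℝ :=
  max (max (supNorm3 D (M 0)) (supNorm3 D (M 1))) (max (supNorm3 D (M 2)) (supNorm3 D (M 3)))

/-- Sup norm over `D` of a function of two variables. -/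
def supNorm2 (D : Set (ℝ × ℝ)) (f : ℝ → ℝ → ℝ) : ℝ :=
  sSup ((fun p : ℝ × ℝ => |f p.1 p.2|) '' D)

/-- `‖g‖₁` for a function of two variables: max of the sup norms of `g` and its two
first-order partial derivatives over `D`. -/
def norm1Two (D : Set (ℝ × ℝ)) (f : ℝ → ℝ → ℝ) : ℝ :=
  max (supNorm2 D f)
    (max (supNorm2 D (fun a b => deriv (fun u => f u b) a))
      (supNorm2 D (fun a b => deriv (fun v => f a v) b)))

/-- The space-time slab `T × [a₁,b₁] × [a₂,b₂]`. -/
def PsetT (T : Set ℝ) (a₁ b₁ a₂ b₂ : ℝ) : Set (ℝ × ℝ × ℝ) := T ×ˢ Icc a₁ b₁ ×ˢ Icc a₂ b₂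

/-- The spatial rectangle `[a₁,b₁] × [a₂,b₂]`. -/
def Rect2 (a₁ b₁ a₂ b₂ : ℝ) : Set (ℝ × ℝ) := Icc a₁ b₁ ×ˢ Icc a₂ b₂

/-- A function of two variables which is continuous and bounded on `D` with continuous
and bounded first-order partial derivatives on `D`. -/
def Smooth2 (D : Set (ℝ × ℝ)) (f : ℝ → ℝ → ℝ) : Prop :=
  ContinuousOn (fun p : ℝ × ℝ => f p.1 p.2) D ∧
  (∀ p ∈ D, DifferentiableAt ℝ (fun u => f u p.2) p.1 ∧
    DifferentiableAt ℝ (fun v => f p.1 v) p.2) ∧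
  ContinuousOn (fun p : ℝ × ℝ => deriv (fun u => f u p.2) p.1) D ∧
  ContinuousOn (fun p : ℝ × ℝ => deriv (fun v => f p.1 v) p.2) D ∧
  ∃ C, ∀ p ∈ D, |f p.1 p.2| ≤ C ∧
    |deriv (fun u => f u p.2) p.1| ≤ C ∧ |deriv (fun v => f p.1 v) p.2| ≤ C

/-- Nonnegativity of a function of two variables on `D`. -/
def Nonneg2 (D : Set (ℝ × ℝ)) (f : ℝ → ℝ → ℝ) : Prop := ∀ p ∈ D, 0 ≤ f p.1 p.2

/-- The initial data `N0` and boundary data `B1, B2, B3, B4` are nonnegative, continuous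
and bounded with continuous bounded first-order partial derivatives, and satisfy the
compatibility conditions at time `t0`. -/
def NiceData (T : Set ℝ) (t0 a₁ b₁ a₂ b₂ : ℝ) (N0 : Fin 4 → ℝ → ℝ → ℝ)
    (B1 B2 B3 B4 : ℝ → ℝ → ℝ) : Prop :=
  (∀ i, Smooth2 (Rect2 a₁ b₁ a₂ b₂) (N0 i) ∧ Nonneg2 (Rect2 a₁ b₁ a₂ b₂) (N0 i)) ∧
  (Smooth2 (T ×ˢ Icc a₂ b₂) B1 ∧ Nonneg2 (T ×ˢ Icc a₂ b₂) B1) ∧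
  (Smooth2 (T ×ˢ Icc a₁ b₁) B2 ∧ Nonneg2 (T ×ˢ Icc a₁ b₁) B2) ∧
  (Smooth2 (T ×ˢ Icc a₁ b₁) B3 ∧ Nonneg2 (T ×ˢ Icc a₁ b₁) B3) ∧
  (Smooth2 (T ×ˢ Icc a₂ b₂) B4 ∧ Nonneg2 (T ×ˢ Icc a₂ b₂) B4) ∧
  (∀ y ∈ Icc a₂ b₂, N0 0 a₁ y = B1 t0 y) ∧
  (∀ x ∈ Icc a₁ b₁, N0 1 x a₂ = B2 t0 x) ∧
  (∀ x ∈ Icc a₁ b₁, N0 2 x b₂ = B3 t0 x) ∧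
  (∀ y ∈ Icc a₂ b₂, N0 3 b₁ y = B4 t0 y)

/-- `N` is a classical solution of the initial-boundary value problem for the planar
four-velocity Broadwell model on `T × [a₁,b₁] × [a₂,b₂]`, with initial time `t0`,
initial data `N0` and boundary data `B1, B2, B3, B4`. -/
def IsSol (c S : ℝ) (T : Set ℝ) (t0 a₁ b₁ a₂ b₂ : ℝ) (N0 : Fin 4 → ℝ → ℝ → ℝ)
    (B1 B2 B3 B4 : ℝ → ℝ → ℝ) (N : Fin 4 → ℝ → ℝ → ℝ → ℝ) : Prop :=
  (∀ i, Cont3 (N i) (PsetT T a₁ b₁ a₂ b₂)) ∧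
  (∀ i, ∀ p ∈ interior (PsetT T a₁ b₁ a₂ b₂), HasPartials (N i) p) ∧
  (∀ i, ∀ p ∈ interior (PsetT T a₁ b₁ a₂ b₂),
    pdtF (N i) p.1 p.2.1 p.2.2 + spX c i * pdxF (N i) p.1 p.2.1 p.2.2 +
      spY c i * pdyF (N i) p.1 p.2.1 p.2.2 = sgn4 i * QQ c S N p.1 p.2.1 p.2.2) ∧
  (∀ i, ∀ x ∈ Icc a₁ b₁, ∀ y ∈ Icc a₂ b₂, N i t0 x y = N0 i x y) ∧
  (∀ t ∈ T, ∀ y ∈ Icc a₂ b₂, N 0 t a₁ y = B1 t y) ∧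
  (∀ t ∈ T, ∀ x ∈ Icc a₁ b₁, N 1 t x a₂ = B2 t x) ∧
  (∀ t ∈ T, ∀ x ∈ Icc a₁ b₁, N 2 t x b₂ = B3 t x) ∧
  (∀ t ∈ T, ∀ y ∈ Icc a₂ b₂, N 3 t b₁ y = B4 t y)

/-- The operator `𝒯`, defined by integration along the characteristics. -/
def Tcal (c S τ a₁ b₁ a₂ b₂ : ℝ) (N0 : Fin 4 → ℝ → ℝ → ℝ) (B1 B2 B3 B4 : ℝ → ℝ → ℝ)
    (M : Fin 4 → ℝ → ℝ → ℝ → ℝ) : Fin 4 → ℝ → ℝ → ℝ → ℝ :=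
  ![fun t x y =>
      if a₁ ≤ x - c * (t - τ) then
        (∫ s in τ..t, QQ c S M s (x + c * (s - t)) y) + N0 0 (x - c * (t - τ)) y
      else
        (∫ s in (t - (x - a₁) / c)..t, QQ c S M s (x + c * (s - t)) y) +
          B1 (t - (x - a₁) / c) y,
    fun t x y =>
      if a₂ ≤ y - c * (t - τ) then
        (∫ s in τ..t, -QQ c S M s x (y + c * (s - t))) + N0 1 x (y - c * (t - τ))
      else
        (∫ s in (t - (y - a₂) / c)..t, -QQ c S M s x (y + c * (s - t))) +
          B2 (t - (y - a₂) / c) x,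
    fun t x y =>
      if y + c * (t - τ) ≤ b₂ then
        (∫ s in τ..t, -QQ c S M s x (y - c * (s - t))) + N0 2 x (y + c * (t - τ))
      else
        (∫ s in (t - (b₂ - y) / c)..t, -QQ c S M s x (y - c * (s - t))) +
          B3 (t - (b₂ - y) / c) x,
    fun t x y =>
      if x + c * (t - τ) ≤ b₁ then
        (∫ s in τ..t, QQ c S M s (x - c * (s - t)) y) + N0 3 (x + c * (t - τ)) y
      else
        (∫ s in (t - (b₁ - x) / c)..t, QQ c S M s (x - c * (s - t)) y) +
          B4 (t - (b₁ - x) / c) y]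

/-- `ρ(|M|) = |M₁| + |M₂| + |M₃| + |M₄|`. -/
def rhoA (M : Fin 4 → ℝ → ℝ → ℝ → ℝ) (t x y : ℝ) : ℝ :=
  |M 0 t x y| + |M 1 t x y| + |M 2 t x y| + |M 3 t x y|

/-- `Q(|M|)`. -/
def QQa (c S : ℝ) (M : Fin 4 → ℝ → ℝ → ℝ → ℝ) (t x y : ℝ) : ℝ :=
  2 * c * S * (|M 1 t x y| * |M 2 t x y| - |M 0 t x y| * |M 3 t x y|)

/-- `Q_i^σ(|M|) = σ ρ(|M|) |M_i| ± Q(|M|)`. -/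
def Qsig (c S σ : ℝ) (i : Fin 4) (M : Fin 4 → ℝ → ℝ → ℝ → ℝ) (t x y : ℝ) : ℝ :=
  σ * rhoA M t x y * |M i t x y| + sgn4 i * QQa c S M t x y

/-- Duhamel formula with integrating factor along the `i`-th characteristic, starting at
time `t0` with datum `datum`. -/
def duh (c S σ : ℝ) (i : Fin 4) (M : Fin 4 → ℝ → ℝ → ℝ → ℝ) (t0 t x y datum : ℝ) : ℝ :=
  ((∫ s in t0..t,
      Real.exp (σ * ∫ r in t0..s,
        rhoA M r (x + spX c i * (r - t)) (y + spY c i * (r - t))) *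
        Qsig c S σ i M s (x + spX c i * (s - t)) (y + spY c i * (s - t))) + datum) *
    Real.exp (-(σ * ∫ s in t0..t, rhoA M s (x + spX c i * (s - t)) (y + spY c i * (s - t))))

/-- The operator `𝒯^σ`. -/
def Tsig (c S σ τ a₁ b₁ a₂ b₂ : ℝ) (N0 : Fin 4 → ℝ → ℝ → ℝ) (B1 B2 B3 B4 : ℝ → ℝ → ℝ)
    (M : Fin 4 → ℝ → ℝ → ℝ → ℝ) : Fin 4 → ℝ → ℝ → ℝ → ℝ :=
  ![fun t x y =>
      if a₁ ≤ x - c * (t - τ) then duh c S σ 0 M τ t x y (N0 0 (x - c * (t - τ)) y)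
      else duh c S σ 0 M (t - (x - a₁) / c) t x y (B1 (t - (x - a₁) / c) y),
    fun t x y =>
      if a₂ ≤ y - c * (t - τ) then duh c S σ 1 M τ t x y (N0 1 x (y - c * (t - τ)))
      else duh c S σ 1 M (t - (y - a₂) / c) t x y (B2 (t - (y - a₂) / c) x),
    fun t x y =>
      if y + c * (t - τ) ≤ b₂ then duh c S σ 2 M τ t x y (N0 2 x (y + c * (t - τ)))
      else duh c S σ 2 M (t - (b₂ - y) / c) t x y (B3 (t - (b₂ - y) / c) x),
    fun t x y =>
      if x + c * (t - τ) ≤ b₁ then duh c S σ 3 M τ t x y (N0 3 (x + c * (t - τ)) y)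
      else duh c S σ 3 M (t - (b₁ - x) / c) t x y (B4 (t - (b₁ - x) / c) y)]

/-- Complement of the four exceptional planes. -/
def offPlanes (c τ a₁ b₁ a₂ b₂ : ℝ) : Set (ℝ × ℝ × ℝ) :=
  {p | p.2.1 - c * (p.1 - τ) ≠ a₁ ∧ p.2.2 - c * (p.1 - τ) ≠ a₂ ∧
    p.2.2 + c * (p.1 - τ) ≠ b₂ ∧ p.2.1 + c * (p.1 - τ) ≠ b₁}

/-- The interior of `𝒫` minus the four exceptional planes. -/
def Dset (c τ τ' a₁ b₁ a₂ b₂ : ℝ) : Set (ℝ × ℝ × ℝ) :=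
  (Ioo τ τ' ×ˢ Ioo a₁ b₁ ×ˢ Ioo a₂ b₂) ∩ offPlanes c τ a₁ b₁ a₂ b₂

/-- `u` has first-order partial derivatives on `D`, continuous and bounded there. -/
def DerivReg (D : Set (ℝ × ℝ × ℝ)) (u : ℝ → ℝ → ℝ → ℝ) : Prop :=
  (∀ p ∈ D, HasPartials u p) ∧
  Cont3 (pdtF u) D ∧ Cont3 (pdxF u) D ∧ Cont3 (pdyF u) D ∧
  ∃ C, ∀ p ∈ D, |pdtF u p.1 p.2.1 p.2.2| ≤ C ∧
    |pdxF u p.1 p.2.1 p.2.2| ≤ C ∧ |pdyF u p.1 p.2.1 p.2.2| ≤ C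

/-- Membership in the space `E`: continuity on `𝒫` plus regularity of the first-order
partial derivatives off the four exceptional planes. -/
def memE (c τ τ' a₁ b₁ a₂ b₂ : ℝ) (u : ℝ → ℝ → ℝ → ℝ) : Prop :=
  Cont3 u (PsetT (Icc τ τ') a₁ b₁ a₂ b₂) ∧ DerivReg (Dset c τ τ' a₁ b₁ a₂ b₂) u

/-- `‖u‖₁`: the max of the sup norm of `u` over `P` and of the sup norms of its
first-order partial derivatives over `D`. -/
def norm1E (P D : Set (ℝ × ℝ × ℝ)) (u : ℝ → ℝ → ℝ → ℝ) : ℝ :=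
  max (supNorm3 P u)
    (max (supNorm3 D (pdtF u)) (max (supNorm3 D (pdxF u)) (supNorm3 D (pdyF u))))

/-- `𝒩(N) = max_i ‖N_i‖₁`. -/
def NN4 (P D : Set (ℝ × ℝ × ℝ)) (N : Fin 4 → ℝ → ℝ → ℝ → ℝ) : ℝ :=
  max (max (norm1E P D (N 0)) (norm1E P D (N 1)))
    (max (norm1E P D (N 2)) (norm1E P D (N 3)))

/-- The convex set `𝓜_R = {N ∈ E⁴ : 𝒩(N) ≤ R}`. -/
def MR (c τ τ' a₁ b₁ a₂ b₂ R : ℝ) : Set (Fin 4 → ℝ → ℝ → ℝ → ℝ) :=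
  {N | (∀ i, memE c τ τ' a₁ b₁ a₂ b₂ (N i)) ∧
    NN4 (PsetT (Icc τ τ') a₁ b₁ a₂ b₂) (Dset c τ τ' a₁ b₁ a₂ b₂) N ≤ R}

/-- The transported initial datum `N̄_i^τ`. -/
def barN0 (c τ : ℝ) (N0 : Fin 4 → ℝ → ℝ → ℝ) (i : Fin 4) : ℝ → ℝ → ℝ → ℝ :=
  fun t x y => N0 i (x - spX c i * (t - τ)) (y - spY c i * (t - τ))

/-- The transported boundary data `N̄₁⁻, N̄₂⁻, N̄₃⁺, N̄₄⁺`. -/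
def barB (c a₁ b₁ a₂ b₂ : ℝ) (B1 B2 B3 B4 : ℝ → ℝ → ℝ) : Fin 4 → ℝ → ℝ → ℝ → ℝ :=
  ![fun t x y => B1 (t - (x - a₁) / c) y,
    fun t x y => B2 (t - (y - a₂) / c) x,
    fun t x y => B3 (t - (b₂ - y) / c) x,
    fun t x y => B4 (t - (b₁ - x) / c) y]

/-- Domain of definition of the transported initial datum `N̄_i^τ` inside `𝒫`. -/
def domBar0 (c τ a₁ b₁ a₂ b₂ : ℝ) (T : Set ℝ) (i : Fin 4) : Set (ℝ × ℝ × ℝ) :=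
  PsetT T a₁ b₁ a₂ b₂ ∩
    {p | (p.2.1 - spX c i * (p.1 - τ), p.2.2 - spY c i * (p.1 - τ)) ∈ Rect2 a₁ b₁ a₂ b₂}

/-- Domains of definition of the transported boundary data inside `𝒫`. -/
def domBarB (c a₁ b₁ a₂ b₂ : ℝ) (T : Set ℝ) : Fin 4 → Set (ℝ × ℝ × ℝ) :=
  ![PsetT T a₁ b₁ a₂ b₂ ∩ {p | p.1 - (p.2.1 - a₁) / c ∈ T},
    PsetT T a₁ b₁ a₂ b₂ ∩ {p | p.1 - (p.2.2 - a₂) / c ∈ T},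
    PsetT T a₁ b₁ a₂ b₂ ∩ {p | p.1 - (b₂ - p.2.2) / c ∈ T},
    PsetT T a₁ b₁ a₂ b₂ ∩ {p | p.1 - (b₁ - p.2.1) / c ∈ T}]

/-- `‖N̄_i^τ‖₁`. -/
def nb0 (c τ a₁ b₁ a₂ b₂ : ℝ) (T : Set ℝ) (N0 : Fin 4 → ℝ → ℝ → ℝ) (i : Fin 4) : ℝ :=
  norm1E (domBar0 c τ a₁ b₁ a₂ b₂ T i) (domBar0 c τ a₁ b₁ a₂ b₂ T i) (barN0 c τ N0 i)

/-- `‖N̄₁⁻‖₁`, `‖N̄₂⁻‖₁`, `‖N̄₃⁺‖₁`, `‖N̄₄⁺‖₁`. -/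
def nbB (c a₁ b₁ a₂ b₂ : ℝ) (T : Set ℝ) (B1 B2 B3 B4 : ℝ → ℝ → ℝ) (i : Fin 4) : ℝ :=
  norm1E (domBarB c a₁ b₁ a₂ b₂ T i) (domBarB c a₁ b₁ a₂ b₂ T i)
    (barB c a₁ b₁ a₂ b₂ B1 B2 B3 B4 i)

/-- `q`: the max of the `‖·‖₁` norms of the eight transported data functions. -/
def qval (c τ a₁ b₁ a₂ b₂ : ℝ) (T : Set ℝ) (N0 : Fin 4 → ℝ → ℝ → ℝ)
    (B1 B2 B3 B4 : ℝ → ℝ → ℝ) : ℝ :=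
  max
    (max (max (nb0 c τ a₁ b₁ a₂ b₂ T N0 0) (nb0 c τ a₁ b₁ a₂ b₂ T N0 1))
      (max (nb0 c τ a₁ b₁ a₂ b₂ T N0 2) (nb0 c τ a₁ b₁ a₂ b₂ T N0 3)))
    (max (max (nbB c a₁ b₁ a₂ b₂ T B1 B2 B3 B4 0) (nbB c a₁ b₁ a₂ b₂ T B1 B2 B3 B4 1))
      (max (nbB c a₁ b₁ a₂ b₂ T B1 B2 B3 B4 2) (nbB c a₁ b₁ a₂ b₂ T B1 B2 B3 B4 3)))

/-- `μ = 8 + 4/c + 8c`. -/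
def muc (c : ℝ) : ℝ := 8 + 4 / c + 8 * c

/-- `λ = 16 + 16c`. -/
def lamc (c : ℝ) : ℝ := 16 + 16 * c

/-- `δ = 4/c + 8 + 4c`. -/
def delc (c : ℝ) : ℝ := 4 / c + 8 + 4 * c

/-- `γ = 1 + c + 1/c`. -/
def gamc (c : ℝ) : ℝ := 1 + c + 1 / c

/-- `p_σ = (μ + λ σ R₀ (τ'-τ))(σ + cS)`. -/
def psig (c S σ R₀ τ τ' : ℝ) : ℝ := (muc c + lamc c * σ * R₀ * (τ' - τ)) * (σ + c * S)

/-- `q_σ = q (1 + δ σ R₀)`. -/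
def qsig (c σ R₀ q : ℝ) : ℝ := q * (1 + delc c * σ * R₀)

/-- `max_i ‖N_i‖₁` for a solution: sup norms of the `N_i` over `Dom`, and of their
first-order partial derivatives over the interior of `Dom`. -/
def NNSol (Dom : Set (ℝ × ℝ × ℝ)) (N : Fin 4 → ℝ → ℝ → ℝ → ℝ) : ℝ :=
  NN4 Dom (interior Dom) N

theorem norm_mul_sub_mul_le_of_le {R : Type*} [NonUnitalSeminormedRing R] {a b a' b' : R}
    {m n d : ℝ} (ha : ‖a‖ ≤ m) (hb' : ‖b'‖ ≤ n) (haa' : ‖a - a'‖ ≤ d) (hbb' : ‖b - b'‖ ≤ d) :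
    ‖a * b - a' * b'‖ ≤ (m + n) * d :=
  calc ‖a * b - a' * b'‖ = ‖a * (b - b') + (a - a') * b'‖ := by
        rw [mul_sub, sub_mul, sub_add_sub_cancel]
    _ ≤ ‖a‖ * ‖b - b'‖ + ‖a - a'‖ * ‖b'‖ :=
        (norm_add_le _ _).trans (add_le_add (norm_mul_le _ _) (norm_mul_le _ _))
    _ ≤ m * d + d * n := by
        gcongr
        · exact (norm_nonneg _).trans ha
        · exact (norm_nonneg _).trans haa'
    _ = (m + n) * d := by ring

theorem norm_integral_sub_integral_le_of_norm_sub_le {E : Type*} [NormedAddCommGroup E]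
    [NormedSpace ℝ E] {f g : ℝ → E} {a b K : ℝ} (hab : a ≤ b)
    (hf : IntervalIntegrable f volume a b) (hg : IntervalIntegrable g volume a b)
    (hfg : ∀ s ∈ Icc a b, ‖f s - g s‖ ≤ K) :
    ‖(∫ s in a..b, f s) - ∫ s in a..b, g s‖ ≤ K * (b - a) := by
  rw [← intervalIntegral.integral_sub hf hg, ← abs_of_nonneg (sub_nonneg.2 hab)]
  refine intervalIntegral.norm_integral_le_of_norm_le_const fun s hs => hfg s ?_
  exact Ioc_subset_Icc_self (uIoc_of_le hab ▸ hs)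

section SupNorm

variable {D : Set (ℝ × ℝ × ℝ)} {M : Fin 4 → ℝ → ℝ → ℝ → ℝ}

theorem norm4_nonneg : 0 ≤ norm4 D M := by
  have h : 0 ≤ supNorm3 D (M 0) := by
    refine Real.sSup_nonneg ?_
    rintro _ ⟨p, -, rfl⟩
    exact abs_nonneg _
  exact h.trans ((le_max_left _ _).trans (le_max_left _ _))

theorem norm4_le {K : ℝ} (hD : D.Nonempty)
    (h : ∀ i t x y, (t, x, y) ∈ D → |M i t x y| ≤ K) : norm4 D M ≤ K := by
  have hsup : ∀ i, supNorm3 D (M i) ≤ K := fun i => by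
    refine csSup_le (hD.image _) ?_
    rintro _ ⟨⟨t, x, y⟩, hp, rfl⟩
    exact h i t x y hp
  exact max_le (max_le (hsup 0) (hsup 1)) (max_le (hsup 2) (hsup 3))

theorem abs_le_norm4 (hD : IsCompact D) (hM : ∀ i, Cont3 (M i) D) (i : Fin 4) {t x y : ℝ}
    (hp : (t, x, y) ∈ D) : |M i t x y| ≤ norm4 D M := by
  have hsup : |M i t x y| ≤ supNorm3 D (M i) :=
    le_csSup (hD.bddAbove_image (hM i).abs) ⟨(t, x, y), hp, rfl⟩
  refine hsup.trans ?_
  unfold norm4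
  fin_cases i <;> simp

end SupNorm

section Collision

variable {c S : ℝ} {M N : Fin 4 → ℝ → ℝ → ℝ → ℝ}

theorem cont3_QQ {D : Set (ℝ × ℝ × ℝ)} (hM : ∀ i, Cont3 (M i) D) : Cont3 (QQ c S M) D :=
  continuousOn_const.mul (((hM 1).mul (hM 2)).sub ((hM 0).mul (hM 3)))

theorem abs_QQ_sub_QQ_le {m n d t x y : ℝ} (hM : ∀ i, |M i t x y| ≤ m)
    (hN : ∀ i, |N i t x y| ≤ n) (hMN : ∀ i, |M i t x y - N i t x y| ≤ d) :
    |QQ c S M t x y - QQ c S N t x y| ≤ 4 * |c * S| * (m + n) * d := by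
  have hprod : ∀ i j, |M i t x y * M j t x y - N i t x y * N j t x y| ≤ (m + n) * d := by
    simp only [← Real.norm_eq_abs] at hM hN hMN ⊢
    exact fun i j => norm_mul_sub_mul_le_of_le (hM i) (hN j) (hMN i) (hMN j)
  calc |QQ c S M t x y - QQ c S N t x y|
      = 2 * |c * S| * |(M 1 t x y * M 2 t x y - N 1 t x y * N 2 t x y) -
          (M 0 t x y * M 3 t x y - N 0 t x y * N 3 t x y)| := by
        rw [← abs_two, ← abs_mul, ← abs_mul]
        unfold QQ
        congr 1
        ring
    _ ≤ 2 * |c * S| * ((m + n) * d + (m + n) * d) := by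
        gcongr
        exact (abs_sub _ _).trans (add_le_add (hprod 1 2) (hprod 0 3))
    _ = 4 * |c * S| * (m + n) * d := by ring

theorem abs_integral_QQ_sub_integral_QQ_le {D : Set (ℝ × ℝ × ℝ)} (hD : IsCompact D)
    (hM : ∀ i, Cont3 (M i) D) (hN : ∀ i, Cont3 (N i) D) {t₀ t : ℝ} (ht : t₀ ≤ t) {X Y : ℝ → ℝ}
    (hX : ContinuousOn X (Icc t₀ t)) (hY : ContinuousOn Y (Icc t₀ t))
    (hXY : ∀ s ∈ Icc t₀ t, (s, X s, Y s) ∈ D) :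
    |(∫ s in t₀..t, QQ c S M s (X s) (Y s)) - ∫ s in t₀..t, QQ c S N s (X s) (Y s)| ≤
      4 * |c * S| * (norm4 D M + norm4 D N) * norm4 D (fun i t x y => M i t x y - N i t x y) *
        (t - t₀) := by
  have hint : ∀ {L : Fin 4 → ℝ → ℝ → ℝ → ℝ}, (∀ i, Cont3 (L i) D) →
      IntervalIntegrable (fun s => QQ c S L s (X s) (Y s)) volume t₀ t := fun hL =>
    ContinuousOn.intervalIntegrable_of_Icc ht <|
      ContinuousOn.comp (f := fun s => (s, X s, Y s)) (cont3_QQ hL) (by fun_prop) hXY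
  refine norm_integral_sub_integral_le_of_norm_sub_le ht (hint hM) (hint hN) fun s hs => ?_
  have hMN : ∀ i, Cont3 ((fun i t x y => M i t x y - N i t x y : Fin 4 → _) i) D := fun i =>
    (hM i).sub (hN i)
  exact abs_QQ_sub_QQ_le (fun i => abs_le_norm4 hD hM i (hXY s hs))
    (fun i => abs_le_norm4 hD hN i (hXY s hs)) (fun i => abs_le_norm4 hD hMN i (hXY s hs))

end Collision

section Characteristics

/-- The distance from `(x, y)` to the side of `[a₁,b₁] × [a₂,b₂]` through which the `i`-th
characteristics enter. -/
def inflowDist (a₁ b₁ a₂ b₂ : ℝ) (i : Fin 4) (x y : ℝ) : ℝ :=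
  ![x - a₁, y - a₂, b₂ - y, b₁ - x] i

/-- The time from which the `i`-th characteristic through `(t, x, y)` runs inside the slab:
the initial time `τ`, or the time at which it crosses the inflow side if that is later. -/
def entryTime (c τ a₁ b₁ a₂ b₂ : ℝ) (i : Fin 4) (t x y : ℝ) : ℝ :=
  max τ (t - inflowDist a₁ b₁ a₂ b₂ i x y / c)

/-- The value transported to `(t, x, y)` along the `i`-th characteristic from its entry point: an
initial datum if the characteristic starts at time `τ`, a boundary datum otherwise. -/
def entryDatum (c τ a₁ b₁ a₂ b₂ : ℝ) (N0 : Fin 4 → ℝ → ℝ → ℝ) (B1 B2 B3 B4 : ℝ → ℝ → ℝ)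
    (i : Fin 4) (t x y : ℝ) : ℝ :=
  if c * (t - τ) ≤ inflowDist a₁ b₁ a₂ b₂ i x y then barN0 c τ N0 i t x y
  else barB c a₁ b₁ a₂ b₂ B1 B2 B3 B4 i t x y

variable {c τ τ' a₁ b₁ a₂ b₂ t x y : ℝ}

theorem le_entryTime (i : Fin 4) : τ ≤ entryTime c τ a₁ b₁ a₂ b₂ i t x y :=
  le_max_left _ _

theorem entryTime_eq_ite (hc : 0 < c) (i : Fin 4) :
    entryTime c τ a₁ b₁ a₂ b₂ i t x y =
      if c * (t - τ) ≤ inflowDist a₁ b₁ a₂ b₂ i x y then τ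
      else t - inflowDist a₁ b₁ a₂ b₂ i x y / c := by
  have hiff : c * (t - τ) ≤ inflowDist a₁ b₁ a₂ b₂ i x y ↔
      t - inflowDist a₁ b₁ a₂ b₂ i x y / c ≤ τ := by
    rw [sub_le_comm, le_div_iff₀' hc]
  rw [entryTime, max_comm, max_def]
  simp only [hiff]

theorem inflowDist_nonneg (hx : x ∈ Icc a₁ b₁) (hy : y ∈ Icc a₂ b₂) (i : Fin 4) :
    0 ≤ inflowDist a₁ b₁ a₂ b₂ i x y := by
  fin_cases i
  exacts [sub_nonneg.2 hx.1, sub_nonneg.2 hy.1, sub_nonneg.2 hy.2, sub_nonneg.2 hx.2]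

theorem entryTime_le (hc : 0 ≤ c) (hτ : τ ≤ t) (hx : x ∈ Icc a₁ b₁) (hy : y ∈ Icc a₂ b₂)
    (i : Fin 4) : entryTime c τ a₁ b₁ a₂ b₂ i t x y ≤ t :=
  max_le hτ (sub_le_self _ (div_nonneg (inflowDist_nonneg hx hy i) hc))

theorem characteristic_mem_PsetT (hc : 0 < c) (hp : (t, x, y) ∈ PsetT (Icc τ τ') a₁ b₁ a₂ b₂)
    (i : Fin 4) {s : ℝ} (hs : s ∈ Icc (entryTime c τ a₁ b₁ a₂ b₂ i t x y) t) :
    (s, x + spX c i * (s - t), y + spY c i * (s - t)) ∈ PsetT (Icc τ τ') a₁ b₁ a₂ b₂ := by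
  obtain ⟨ht, hx, hy⟩ := hp
  have hdist : c * (t - s) ≤ inflowDist a₁ b₁ a₂ b₂ i x y := by
    rw [← le_div_iff₀' hc]
    exact sub_le_comm.1 ((le_max_right _ _).trans hs.1)
  have hpos : 0 ≤ c * (t - s) := mul_nonneg hc.le (sub_nonneg.2 hs.2)
  simp only [mem_Icc] at hx hy
  refine ⟨⟨(le_entryTime i).trans hs.1, hs.2.trans ht.2⟩, ⟨?_, ?_⟩, ?_, ?_⟩ <;>
    fin_cases i <;> simp [inflowDist, spX, spY] at hdist ⊢ <;> linarith

theorem Tcal_eq_integral_add_entryDatum (hc : 0 < c) (S : ℝ) (N0 : Fin 4 → ℝ → ℝ → ℝ)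
    (B1 B2 B3 B4 : ℝ → ℝ → ℝ) (M : Fin 4 → ℝ → ℝ → ℝ → ℝ) (i : Fin 4) :
    Tcal c S τ a₁ b₁ a₂ b₂ N0 B1 B2 B3 B4 M i t x y =
      sgn4 i * (∫ s in entryTime c τ a₁ b₁ a₂ b₂ i t x y..t,
        QQ c S M s (x + spX c i * (s - t)) (y + spY c i * (s - t))) +
      entryDatum c τ a₁ b₁ a₂ b₂ N0 B1 B2 B3 B4 i t x y := by
  trans if c * (t - τ) ≤ inflowDist a₁ b₁ a₂ b₂ i x y then
      sgn4 i * (∫ s in τ..t, QQ c S M s (x + spX c i * (s - t)) (y + spY c i * (s - t))) +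
        barN0 c τ N0 i t x y
    else
      sgn4 i * (∫ s in (t - inflowDist a₁ b₁ a₂ b₂ i x y / c)..t,
        QQ c S M s (x + spX c i * (s - t)) (y + spY c i * (s - t))) +
          barB c a₁ b₁ a₂ b₂ B1 B2 B3 B4 i t x y
  · fin_cases i
    · refine if_congr le_sub_comm ?_ ?_ <;> simp [inflowDist, spX, spY, sgn4, barN0, barB]
    · refine if_congr le_sub_comm ?_ ?_ <;> simp [inflowDist, spX, spY, sgn4, barN0, barB]
    · refine if_congr le_sub_iff_add_le'.symm ?_ ?_ <;>
        simp [inflowDist, spX, spY, sgn4, barN0, barB, sub_eq_add_neg]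
    · refine if_congr le_sub_iff_add_le'.symm ?_ ?_ <;>
        simp [inflowDist, spX, spY, sgn4, barN0, barB, sub_eq_add_neg]
  · rw [entryTime_eq_ite hc, entryDatum]
    split_ifs <;> rfl

end Characteristics

theorem abs_Tcal_sub_Tcal_le {c S τ τ' a₁ b₁ a₂ b₂ : ℝ} (hc : 0 < c)
    (N0 : Fin 4 → ℝ → ℝ → ℝ) (B1 B2 B3 B4 : ℝ → ℝ → ℝ) {M N : Fin 4 → ℝ → ℝ → ℝ → ℝ}
    (hM : ∀ i, Cont3 (M i) (PsetT (Icc τ τ') a₁ b₁ a₂ b₂))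
    (hN : ∀ i, Cont3 (N i) (PsetT (Icc τ τ') a₁ b₁ a₂ b₂)) (i : Fin 4) {t x y : ℝ}
    (hp : (t, x, y) ∈ PsetT (Icc τ τ') a₁ b₁ a₂ b₂) :
    |Tcal c S τ a₁ b₁ a₂ b₂ N0 B1 B2 B3 B4 M i t x y -
        Tcal c S τ a₁ b₁ a₂ b₂ N0 B1 B2 B3 B4 N i t x y| ≤
      4 * |c * S| *
        (norm4 (PsetT (Icc τ τ') a₁ b₁ a₂ b₂) M + norm4 (PsetT (Icc τ τ') a₁ b₁ a₂ b₂) N) *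
        norm4 (PsetT (Icc τ τ') a₁ b₁ a₂ b₂) (fun i t x y => M i t x y - N i t x y) *
        (t - entryTime c τ a₁ b₁ a₂ b₂ i t x y) := by
  have hP : IsCompact (PsetT (Icc τ τ') a₁ b₁ a₂ b₂) :=
    isCompact_Icc.prod (isCompact_Icc.prod isCompact_Icc)
  have hsgn : |sgn4 i| = 1 := by fin_cases i <;> simp [sgn4]
  rw [Tcal_eq_integral_add_entryDatum hc, Tcal_eq_integral_add_entryDatum hc,
    add_sub_add_right_eq_sub, ← mul_sub, abs_mul, hsgn, one_mul]
  have ⟨ht, hx, hy⟩ := hp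
  exact abs_integral_QQ_sub_integral_QQ_le hP hM hN (entryTime_le hc.le ht.1 hx hy i) (by fun_prop)
    (by fun_prop) fun s hs => characteristic_mem_PsetT hc hp i hs

theorem Tcal_lipschitz_general {c τ τ' a₁ b₁ a₂ b₂ : ℝ} (S : ℝ) (hc : 0 < c) (hτ : τ ≤ τ')
    (ha : a₁ ≤ b₁) (hb : a₂ ≤ b₂) (N0 : Fin 4 → ℝ → ℝ → ℝ) (B1 B2 B3 B4 : ℝ → ℝ → ℝ)
    {M N : Fin 4 → ℝ → ℝ → ℝ → ℝ} (hM : ∀ i, Cont3 (M i) (PsetT (Icc τ τ') a₁ b₁ a₂ b₂))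
    (hN : ∀ i, Cont3 (N i) (PsetT (Icc τ τ') a₁ b₁ a₂ b₂)) :
    norm4 (PsetT (Icc τ τ') a₁ b₁ a₂ b₂) (fun i t x y =>
        Tcal c S τ a₁ b₁ a₂ b₂ N0 B1 B2 B3 B4 M i t x y -
          Tcal c S τ a₁ b₁ a₂ b₂ N0 B1 B2 B3 B4 N i t x y) ≤
      (τ' - τ) * (4 * c * |S|) *
        (norm4 (PsetT (Icc τ τ') a₁ b₁ a₂ b₂) M + norm4 (PsetT (Icc τ τ') a₁ b₁ a₂ b₂) N) *
        norm4 (PsetT (Icc τ τ') a₁ b₁ a₂ b₂) (fun i t x y => M i t x y - N i t x y) := by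
  set P := PsetT (Icc τ τ') a₁ b₁ a₂ b₂
  have hne : P.Nonempty :=
    (nonempty_Icc.2 hτ).prod ((nonempty_Icc.2 ha).prod (nonempty_Icc.2 hb))
  refine norm4_le hne fun i t x y hp => ?_
  have hconst : 0 ≤ 4 * |c * S| * (norm4 P M + norm4 P N) *
      norm4 P (fun i t x y => M i t x y - N i t x y) :=
    mul_nonneg (mul_nonneg (by positivity) (add_nonneg norm4_nonneg norm4_nonneg)) norm4_nonneg
  calc _ ≤ 4 * |c * S| * (norm4 P M + norm4 P N) *
        norm4 P (fun i t x y => M i t x y - N i t x y) *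
          (t - entryTime c τ a₁ b₁ a₂ b₂ i t x y) :=
        abs_Tcal_sub_Tcal_le hc N0 B1 B2 B3 B4 hM hN i hp
    _ ≤ 4 * |c * S| * (norm4 P M + norm4 P N) *
        norm4 P (fun i t x y => M i t x y - N i t x y) * (τ' - τ) :=
        mul_le_mul_of_nonneg_left (sub_le_sub hp.1.2 (le_entryTime i)) hconst
    _ = _ := by rw [abs_mul, abs_of_pos hc]; ring

/-- The estimate `‖𝒯(M) - 𝒯(N)‖ ≤ (τ'-τ)·4cS·(‖M‖+‖N‖)·‖M-N‖`. -/
theorem Tcal_lipschitz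
    (c S τ τ' a₁ b₁ a₂ b₂ : ℝ) (hc : 0 < c) (hS : 0 < S)
    (hτ : τ < τ') (ha : a₁ < b₁) (hb : a₂ < b₂)
    (N0 : Fin 4 → ℝ → ℝ → ℝ) (B1 B2 B3 B4 : ℝ → ℝ → ℝ)
    (hdata : NiceData (Icc τ τ') τ a₁ b₁ a₂ b₂ N0 B1 B2 B3 B4)
    (M N : Fin 4 → ℝ → ℝ → ℝ → ℝ)
    (hM : ∀ i, Cont3 (M i) (PsetT (Icc τ τ') a₁ b₁ a₂ b₂)) (hN : ∀ i, Cont3 (N i) (PsetT (Icc τ τ') a₁ b₁ a₂ b₂)) :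
    norm4 (PsetT (Icc τ τ') a₁ b₁ a₂ b₂) (fun i t x y => Tcal c S τ a₁ b₁ a₂ b₂ N0 B1 B2 B3 B4 M i t x y - Tcal c S τ a₁ b₁ a₂ b₂ N0 B1 B2 B3 B4 N i t x y) ≤
      (τ' - τ) * (4 * c * S) * (norm4 (PsetT (Icc τ τ') a₁ b₁ a₂ b₂) M + norm4 (PsetT (Icc τ τ') a₁ b₁ a₂ b₂) N) *
        norm4 (PsetT (Icc τ τ') a₁ b₁ a₂ b₂) (fun i t x y => M i t x y - N i t x y) := by
  simpa only [abs_of_pos hS] using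
    Tcal_lipschitz_general S hc hτ.le ha.le hb.le N0 B1 B2 B3 B4 hM hN

end
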